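/- For every dimension n ≥ 1 there exist ε ∈ (0,1) and a constant C, depending only on n, such that for every ball B = B(x,r) in ℝⁿ and every function u harmonic on the ball 3B = B(x,3r), one has ((1/|B|)∫_{B} |∇u|² dx)^{1/2} ≤ C·((1/|2B|)∫_{2B} |∇u|^{2−ε} dx)^{1/(2−ε)}. -/

import Mathlib

/-!
The weight `φ(z) = (ρ² - |z|²)₊` satisfies `φ(z) z = -¼ ∇(φ²)(z)`. If `v` is harmonic near
`B(y, ρ)`, the derivative in `t` of `∫ φ(z) v(y - tz) dz` is therefore, after integrating by parts,
a multiple of `∫ φ(z)² Δv(y - tz) dz = 0`, and comparing `t = 0` with `t = 1` gives the mean value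
property `∫ φ(z) v(y - z) dz = (∫ φ) v(y)`. Differentiating this convolution in `y` yields the same
property for `∇v` without any regularity beyond `C²`. As `φ ≤ ρ²` and `φ ≥ ¾ρ²` on `B(0, ρ/2)`,
the gradient on `B(x, r)` is bounded pointwise by a constant times its average over `B(x, 2r)`, and
Jensen's inequality replaces that average by an `L^q` average for any `q ≥ 1`.
-/

open MeasureTheory Metric ENNReal

/-- `u` is harmonic on `U`: it is `C²` on `U` and `Δu = Σⱼ ∂²u/∂xⱼ² = 0` on `U`. -/
def IsHarmonicOn {n : ℕ} (u : EuclideanSpace ℝ (Fin n) → ℝ)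
    (U : Set (EuclideanSpace ℝ (Fin n))) : Prop :=
  ContDiffOn ℝ 2 u U ∧ ∀ x ∈ U,
    ∑ j : Fin n,
      fderiv ℝ (fun y => fderiv ℝ u y (EuclideanSpace.single j (1 : ℝ))) x
        (EuclideanSpace.single j (1 : ℝ)) = 0

open InnerProductSpace Module Set Filter ContinuousLinearMap
open scoped Topology Laplacian

section Averages

variable {α : Type*} {mα : MeasurableSpace α} {μ : Measure α} {s t : Set α} {f : α → ℝ≥0∞}

lemma laverage_rpow_rpow_le_of_exponent_le [IsFiniteMeasure μ] [NeZero μ] {p q : ℝ} (hp : 0 < p)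
    (hpq : p ≤ q) (hf : AEMeasurable f μ) :
    (⨍⁻ a, f a ^ p ∂μ) ^ (1 / p) ≤ (⨍⁻ a, f a ^ q ∂μ) ^ (1 / q) := by
  have hf' : AEStronglyMeasurable f ((μ univ)⁻¹ • μ) := (hf.smul_measure _).aestronglyMeasurable
  exact eLpNorm'_le_eLpNorm'_of_exponent_le hp hpq ((μ univ)⁻¹ • μ) hf'

lemma setLAverage_rpow_rpow_le_of_forall_le {p : ℝ} (hp : 0 < p) (hs : MeasurableSet s)
    (hs₀ : μ s ≠ 0) (hs_top : μ s ≠ ∞) {A : ℝ≥0∞} (hfA : ∀ a ∈ s, f a ≤ A) :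
    (⨍⁻ a in s, f a ^ p ∂μ) ^ (1 / p) ≤ A := by
  have hpow : ⨍⁻ a in s, f a ^ p ∂μ ≤ A ^ p :=
    calc ⨍⁻ a in s, f a ^ p ∂μ ≤ ⨍⁻ _ in s, A ^ p ∂μ :=
          laverage_mono_ae <| ae_restrict_of_forall_mem hs fun a ha ↦
            ENNReal.rpow_le_rpow (hfA a ha) hp.le
      _ = A ^ p := setLAverage_const hs₀ hs_top _
  rwa [one_div, ENNReal.rpow_inv_le_iff hp]

lemma setLAverage_le_mul_setLAverage_of_subset {K : ℝ≥0∞} (hK₀ : K ≠ 0) (hK : K ≠ ∞)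
    (hst : s ⊆ t) (hμ : μ t ≤ K * μ s) :
    ⨍⁻ a in s, f a ∂μ ≤ K * ⨍⁻ a in t, f a ∂μ := by
  have hinv : (μ s)⁻¹ ≤ K * (μ t)⁻¹ :=
    calc (μ s)⁻¹ = K * (K * μ s)⁻¹ := by
          rw [ENNReal.mul_inv (.inl hK₀) (.inl hK), ← mul_assoc, ENNReal.mul_inv_cancel hK₀ hK,
            one_mul]
      _ ≤ K * (μ t)⁻¹ := by gcongr
  calc ⨍⁻ a in s, f a ∂μ = (∫⁻ a in s, f a ∂μ) * (μ s)⁻¹ := by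
        rw [setLAverage_eq, div_eq_mul_inv]
    _ ≤ (∫⁻ a in t, f a ∂μ) * (K * (μ t)⁻¹) := by gcongr
    _ = K * ⨍⁻ a in t, f a ∂μ := by rw [setLAverage_eq, div_eq_mul_inv]; ring

end Averages

section Bump

variable {E : Type*} [NormedAddCommGroup E] {ρ : ℝ}

/-- The truncated paraboloid `(ρ² - ‖z‖²)₊`, the radial weight of the mean value property below. -/
noncomputable def parabolicBump (ρ : ℝ) (z : E) : ℝ :=
  max (ρ ^ 2 - ‖z‖ ^ 2) 0

lemma parabolicBump_nonneg (z : E) : 0 ≤ parabolicBump ρ z := le_max_right _ _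

lemma parabolicBump_le_sq (z : E) : parabolicBump ρ z ≤ ρ ^ 2 :=
  max_le (sub_le_self _ (sq_nonneg _)) (sq_nonneg ρ)

lemma parabolicBump_eq_zero_of_notMem_ball (hρ : 0 ≤ ρ) {z : E} (hz : z ∉ ball 0 ρ) :
    parabolicBump ρ z = 0 := by
  rw [mem_ball_zero_iff, not_lt] at hz
  exact max_eq_right (sub_nonpos.2 (pow_le_pow_left₀ hρ hz 2))

lemma continuous_parabolicBump : Continuous (parabolicBump ρ : E → ℝ) := by
  unfold parabolicBump
  fun_prop

lemma hasCompactSupport_parabolicBump [ProperSpace E] (hρ : 0 ≤ ρ) :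
    HasCompactSupport (parabolicBump ρ : E → ℝ) :=
  .intro (isCompact_closedBall 0 ρ) fun _ hz ↦
    parabolicBump_eq_zero_of_notMem_ball hρ fun h ↦ hz (ball_subset_closedBall h)

lemma sq_mul_measure_ball_le_lintegral_parabolicBump [NormedSpace ℝ E] [FiniteDimensional ℝ E]
    [MeasurableSpace E] [BorelSpace E] (μ : Measure E) [μ.IsAddHaarMeasure] :
    ENNReal.ofReal (ρ ^ 2) * μ (ball 0 ρ) ≤
      ENNReal.ofReal (4 / 3 * 2 ^ finrank ℝ E) *
        ∫⁻ z : E, ENNReal.ofReal (parabolicBump ρ z) ∂μ := by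
  have hlower : ∀ z ∈ ball (0 : E) (1 / 2 * ρ),
      ENNReal.ofReal (3 / 4 * ρ ^ 2) ≤ ENNReal.ofReal (parabolicBump ρ z) := fun z hz ↦ by
    rw [mem_ball_zero_iff] at hz
    have := pow_le_pow_left₀ (norm_nonneg z) hz.le 2
    exact ENNReal.ofReal_le_ofReal (le_max_of_le_left (by linarith))
  have hconst : 4 / 3 * 2 ^ finrank ℝ E * (3 / 4 * ρ ^ 2) * (1 / 2) ^ finrank ℝ E = ρ ^ 2 := by
    rw [one_div, inv_pow]
    field_simp
  calc ENNReal.ofReal (ρ ^ 2) * μ (ball 0 ρ)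
      = ENNReal.ofReal (4 / 3 * 2 ^ finrank ℝ E) *
          (ENNReal.ofReal (3 / 4 * ρ ^ 2) * μ (ball 0 (1 / 2 * ρ))) := by
        rw [μ.addHaar_ball_mul_of_pos 0 one_half_pos, ← mul_assoc, ← mul_assoc,
          ← ENNReal.ofReal_mul (by positivity), ← ENNReal.ofReal_mul (by positivity), hconst]
    _ = ENNReal.ofReal (4 / 3 * 2 ^ finrank ℝ E) *
          ∫⁻ _ in ball 0 (1 / 2 * ρ), ENNReal.ofReal (3 / 4 * ρ ^ 2) ∂μ := by
        rw [setLIntegral_const]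
    _ ≤ ENNReal.ofReal (4 / 3 * 2 ^ finrank ℝ E) *
          ∫⁻ z : E, ENNReal.ofReal (parabolicBump ρ z) ∂μ := by
        gcongr _ * ?_
        exact (setLIntegral_mono' measurableSet_ball hlower).trans (setLIntegral_le_lintegral _ _)

lemma hasDerivAt_max_zero_sq (s : ℝ) :
    HasDerivAt (fun s : ℝ ↦ max s 0 ^ 2) (2 * max s 0) s := by
  refine hasDerivAt_of_hasDerivAt_of_ne' (x := 0) (g := fun s ↦ 2 * max s 0) (fun s hs ↦ ?_)
    (by fun_prop) (by fun_prop) s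
  rcases hs.lt_or_gt with hs | hs
  · rw [max_eq_right hs.le, mul_zero]
    refine (hasDerivAt_const s (0 : ℝ)).congr_of_eventuallyEq ?_
    filter_upwards [gt_mem_nhds hs] with a ha
    simp [max_eq_right ha.le]
  · rw [max_eq_left hs.le]
    refine HasDerivAt.congr_of_eventuallyEq (by simpa using hasDerivAt_pow 2 s) ?_
    filter_upwards [lt_mem_nhds hs] with a ha
    simp [max_eq_left ha.le]

variable [InnerProductSpace ℝ E]

lemma hasFDerivAt_parabolicBump_sq (z : E) :
    HasFDerivAt (fun z ↦ parabolicBump ρ z ^ 2) ((-4 * parabolicBump ρ z) • innerSL ℝ z) z := by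
  have hsub : HasFDerivAt (fun z : E ↦ ρ ^ 2 - ‖z‖ ^ 2) (-(2 • innerSL ℝ z)) z :=
    (hasStrictFDerivAt_norm_sq z).hasFDerivAt.const_sub (ρ ^ 2)
  refine ((hasDerivAt_max_zero_sq _).comp_hasFDerivAt z hsub).congr_fderiv ?_
  rw [smul_neg, two_nsmul, ← two_smul ℝ, smul_smul, ← _root_.neg_smul, parabolicBump]
  ring_nf

lemma contDiff_parabolicBump_sq : ContDiff ℝ 1 (fun z : E ↦ parabolicBump ρ z ^ 2) := by
  refine contDiff_one_iff_hasFDerivAt.2 ⟨_, ?_, hasFDerivAt_parabolicBump_sq⟩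
  have := continuous_parabolicBump (E := E) (ρ := ρ)
  fun_prop

lemma sum_fderiv_parabolicBump_sq_smul {ι F : Type*} [Fintype ι] [NormedAddCommGroup F]
    [NormedSpace ℝ F] (b : OrthonormalBasis ι ℝ E) (L : E →L[ℝ] F) (z : E) :
    ∑ i, fderiv ℝ (fun z ↦ parabolicBump ρ z ^ 2) z (b i) • L (b i) =
      (-4 * parabolicBump ρ z) • L z := by
  have hexpand : L z = ∑ i, ⟪z, b i⟫_ℝ • L (b i) := by
    conv_lhs => rw [← b.sum_repr' z]
    simp only [map_sum, map_smul, real_inner_comm z]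
  simp only [hexpand, (hasFDerivAt_parabolicBump_sq z).fderiv, Finset.smul_sum, smul_smul,
    smul_apply, innerSL_apply_apply, smul_eq_mul]

end Bump

section Calculus

lemma eventually_forall_mem_ball {E : Type*} [SeminormedAddCommGroup E] [ProperSpace E]
    {p : E → Prop} {y : E} {ρ : ℝ} (hp : ∀ z ∈ closedBall y ρ, ∀ᶠ w in 𝓝 z, p w) :
    ∀ᶠ w in 𝓝 y, ∀ z ∈ ball w ρ, p z := by
  have htranslate : ∀ᶠ w in 𝓝 y, ∀ z ∈ closedBall (0 : E) ρ, p (w + z) :=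
    (isCompact_closedBall 0 ρ).eventually_forall_of_forall_eventually fun z hz ↦
      (continuous_add.tendsto (y, z)).eventually (hp _ (by simpa using hz))
  filter_upwards [htranslate] with w hw z hz
  simpa using hw (z - w) (by simpa [dist_eq_norm] using (mem_ball.1 hz).le)

variable {E F : Type*} [NormedAddCommGroup E] [NormedSpace ℝ E] [FiniteDimensional ℝ E]
  [NormedAddCommGroup F] [NormedSpace ℝ F]

lemma exists_contDiff_hasCompactSupport_eventuallyEq {n : ℕ∞} {u : E → F} {K U : Set E}
    (hK : IsCompact K) (hU : IsOpen U) (hKU : K ⊆ U) (hu : ContDiffOn ℝ n u U) :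
    ∃ v : E → F, ContDiff ℝ n v ∧ HasCompactSupport v ∧ ∀ z ∈ K, v =ᶠ[𝓝 z] u := by
  obtain ⟨L, hL, hKL, hLU⟩ := exists_compact_between hK hU hKU
  obtain ⟨χ, hχ_one, hχ_zero, -⟩ := exists_contMDiffMap_one_nhds_of_subset_interior
    (n := n) (modelWithCornersSelf ℝ E) hK.isClosed hKL
  have hχ : ContDiff ℝ n χ := χ.contMDiff.contDiff
  have hsupp : tsupport (fun z ↦ χ z • u z) ⊆ L :=
    closure_minimal (fun z hz ↦ by_contra fun hzL ↦ hz (by simp [hχ_zero z hzL])) hL.isClosed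
  refine ⟨fun z ↦ χ z • u z, ?_, hL.of_isClosed_subset (isClosed_tsupport _) hsupp, ?_⟩
  · exact contMDiff_iff_contDiff.1 <| contMDiff_of_tsupport fun z hz ↦
      (hχ.contDiffAt.smul (hu.contDiffAt (hU.mem_nhds (hLU (hsupp hz))))).contMDiffAt
  · intro z hz
    filter_upwards [eventually_nhdsSet_iff_forall.1 hχ_one z hz] with w hw
    rw [hw, one_smul]

variable [MeasurableSpace E] [BorelSpace E] {μ : Measure E}

lemma hasDerivAt_integral_smul_comp_sub_smul [IsFiniteMeasureOnCompacts μ]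
    {k : E → ℝ} (hk : Continuous k) (hkc : HasCompactSupport k) {v : E → F}
    (hv : ContDiff ℝ 1 v) (hvc : HasCompactSupport v) (y : E) (t : ℝ) :
    HasDerivAt (fun t : ℝ ↦ ∫ z, k z • v (y - t • z) ∂μ)
      (∫ z, k z • fderiv ℝ v (y - t • z) (-z) ∂μ) t := by
  have hdv : Continuous (fderiv ℝ v) := hv.continuous_fderiv one_ne_zero
  obtain ⟨M, hM⟩ := (hvc.fderiv (𝕜 := ℝ)).exists_bound_of_continuous hdv
  refine (hasDerivAt_integral_of_dominated_loc_of_deriv_le (s := univ)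
    (F := fun t z ↦ k z • v (y - t • z)) (F' := fun t z ↦ k z • fderiv ℝ v (y - t • z) (-z))
    (bound := fun z ↦ ‖k z‖ * (M * ‖z‖)) univ_mem
    (.of_forall fun s ↦ (by fun_prop : Continuous _).aestronglyMeasurable)
    ((by fun_prop : Continuous _).integrable_of_hasCompactSupport hkc.smul_right)
    (by fun_prop : Continuous _).aestronglyMeasurable
    (.of_forall fun z s _ ↦ ?_)
    ((by fun_prop : Continuous _).integrable_of_hasCompactSupport hkc.norm.mul_right)
    (.of_forall fun z s _ ↦ ?_)).2
  · rw [norm_smul, ← norm_neg z]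
    gcongr
    exact (fderiv ℝ v (y - s • z)).le_of_opNorm_le (hM _) _
  · have hline : HasDerivAt (fun s : ℝ ↦ y - s • z) (-z) s := by
      simpa using ((hasDerivAt_id s).smul_const z).const_sub y
    exact ((hv.differentiable one_ne_zero _).hasFDerivAt.comp_hasDerivAt s hline).const_smul (k z)

lemma integral_sum_fderiv_smul_apply [μ.IsAddHaarMeasure] {ι : Type*} [Fintype ι]
    (b : ι → E) {ψ : E → ℝ} (hψ : ContDiff ℝ 1 ψ) (hψc : HasCompactSupport ψ)
    {G : E → E →L[ℝ] F} (hG : ContDiff ℝ 1 G) :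
    ∫ z, ∑ i, fderiv ℝ ψ z (b i) • G z (b i) ∂μ =
      -∫ z, ψ z • ∑ i, fderiv ℝ G z (b i) (b i) ∂μ := by
  have hGi : ∀ i, Differentiable ℝ fun z ↦ G z (b i) := fun i ↦
    (hG.differentiable one_ne_zero).clm_apply (differentiable_const _)
  have hfderiv : ∀ i z, fderiv ℝ (fun z ↦ G z (b i)) z (b i) = fderiv ℝ G z (b i) (b i) := by
    intro i z
    simp [fderiv_clm_apply (hG.differentiable one_ne_zero z) (differentiableAt_const (b i))]
  have hint_left : ∀ i, Integrable (fun z ↦ fderiv ℝ ψ z (b i) • G z (b i)) μ := fun i ↦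
    (by fun_prop : Continuous _).integrable_of_hasCompactSupport
      (hψc.fderiv_apply ℝ (b i)).smul_right
  have hint_right : ∀ i, Integrable (fun z ↦ ψ z • fderiv ℝ G z (b i) (b i)) μ := fun i ↦
    (by fun_prop : Continuous _).integrable_of_hasCompactSupport hψc.smul_right
  have hint : ∀ i, Integrable (fun z ↦ ψ z • G z (b i)) μ := fun i ↦
    (by fun_prop : Continuous _).integrable_of_hasCompactSupport hψc.smul_right
  have hparts : ∀ i, ∫ z, ψ z • fderiv ℝ G z (b i) (b i) ∂μ =
      -∫ z, fderiv ℝ ψ z (b i) • G z (b i) ∂μ := fun i ↦ by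
    simpa only [hfderiv] using integral_smul_fderiv_eq_neg_fderiv_smul_of_integrable
      (g := fun z ↦ G z (b i)) (hint_left i) (by simpa only [hfderiv] using hint_right i) (hint i)
      (fun z _ ↦ hψ.differentiable one_ne_zero z) (fun z _ ↦ hGi i z)
  simp_rw [Finset.smul_sum]
  rw [integral_finsetSum _ fun i _ ↦ hint_left i, integral_finsetSum _ fun i _ ↦ hint_right i]
  simp_rw [hparts, Finset.sum_neg_distrib, neg_neg]

end Calculus

section MeanValue

variable {E F : Type*} [NormedAddCommGroup E] [InnerProductSpace ℝ E] [FiniteDimensional ℝ E]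
  [NormedAddCommGroup F] [NormedSpace ℝ F]

lemma laplacian_eq_sum_fderiv_fderiv {ι : Type*} [Fintype ι] (b : OrthonormalBasis ι ℝ E)
    (f : E → F) (x : E) : Δ f x = ∑ i, fderiv ℝ (fderiv ℝ f) x (b i) (b i) := by
  simp [laplacian_eq_iteratedFDeriv_orthonormalBasis f b, iteratedFDeriv_two_apply]

variable [MeasurableSpace E] [BorelSpace E] {μ : Measure E} [μ.IsAddHaarMeasure] {ρ : ℝ}

lemma integral_parabolicBump_smul_fderiv_apply (hρ : 0 ≤ ρ) {v : E → F}
    (hv : ContDiff ℝ 2 v) (y : E) (t : ℝ) :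
    ∫ z, parabolicBump ρ z • fderiv ℝ v (y - t • z) z ∂μ =
      -(t / 4) • ∫ z, parabolicBump ρ z ^ 2 • Δ v (y - t • z) ∂μ := by
  let b := stdOrthonormalBasis ℝ E
  have hdv : ContDiff ℝ 1 (fderiv ℝ v) := hv.fderiv_right le_rfl
  have hfderiv : ∀ z, fderiv ℝ (fun z ↦ fderiv ℝ v (y - t • z)) z =
      -(t • fderiv ℝ (fderiv ℝ v) (y - t • z)) := fun z ↦ by
    have hinner : HasFDerivAt (fun z : E ↦ y - t • z) (-(t • .id ℝ E)) z :=
      ((hasFDerivAt_id z).const_smul t).const_sub y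
    have hcomp : HasFDerivAt (fun z ↦ fderiv ℝ v (y - t • z)) _ z :=
      (hdv.differentiable one_ne_zero _).hasFDerivAt.comp z hinner
    rw [hcomp.fderiv, comp_neg, comp_smul, comp_id]
  have hparts := integral_sum_fderiv_smul_apply (μ := μ) b contDiff_parabolicBump_sq
    ((hasCompactSupport_parabolicBump hρ).comp_left (g := (· ^ 2)) (zero_pow two_ne_zero))
    (hdv.comp (by fun_prop : ContDiff ℝ 1 fun z : E ↦ y - t • z))
  simp only [Function.comp_def, hfderiv, sum_fderiv_parabolicBump_sq_smul, mul_smul, neg_apply,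
    smul_apply, Finset.sum_neg_distrib, smul_neg, integral_neg, neg_neg, ← Finset.smul_sum,
    ← laplacian_eq_sum_fderiv_fderiv b, smul_comm _ t, integral_smul] at hparts
  calc ∫ z, parabolicBump ρ z • fderiv ℝ v (y - t • z) z ∂μ
      = (-4 : ℝ)⁻¹ • (-4 : ℝ) • ∫ z, parabolicBump ρ z • fderiv ℝ v (y - t • z) z ∂μ :=
        (inv_smul_smul₀ (by norm_num) _).symm
    _ = -(t / 4) • ∫ z, parabolicBump ρ z ^ 2 • Δ v (y - t • z) ∂μ := by
        rw [hparts]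
        module

variable [CompleteSpace F]

lemma integral_parabolicBump_smul_comp_sub (hρ : 0 ≤ ρ) {v : E → F} (hv : ContDiff ℝ 2 v)
    (hvc : HasCompactSupport v) {y : E} (hΔ : ∀ z ∈ ball y ρ, Δ v z = 0) :
    ∫ z, parabolicBump ρ z • v (y - z) ∂μ = (∫ z : E, parabolicBump ρ z ∂μ) • v y := by
  have hderiv : ∀ t ∈ Ico (0 : ℝ) 1,
      HasDerivAt (fun t : ℝ ↦ ∫ z, parabolicBump ρ z • v (y - t • z) ∂μ) 0 t := fun t ht ↦ by
    have hzero : ∀ z : E, parabolicBump ρ z ^ 2 • Δ v (y - t • z) = 0 := fun z ↦ by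
      by_cases hz : z ∈ ball (0 : E) ρ
      · have hmem : y - t • z ∈ ball y ρ := by
          rw [mem_ball_zero_iff] at hz
          rw [mem_ball_iff_norm, sub_sub_cancel_left, norm_neg, norm_smul,
            Real.norm_of_nonneg ht.1]
          exact (mul_le_of_le_one_left (norm_nonneg z) ht.2.le).trans_lt hz
        rw [hΔ _ hmem, smul_zero]
      · rw [parabolicBump_eq_zero_of_notMem_ball hρ hz, zero_pow two_ne_zero, zero_smul]
    convert hasDerivAt_integral_smul_comp_sub_smul (μ := μ) continuous_parabolicBump
      (hasCompactSupport_parabolicBump hρ) (hv.of_le one_le_two) hvc y t using 1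
    simp only [map_neg, smul_neg, integral_neg, integral_parabolicBump_smul_fderiv_apply hρ hv,
      hzero, integral_zero, smul_zero, neg_zero]
  have hcont : Continuous fun t : ℝ ↦ ∫ z, parabolicBump ρ z • v (y - t • z) ∂μ :=
    continuous_iff_continuousAt.2 fun t ↦ (hasDerivAt_integral_smul_comp_sub_smul
      continuous_parabolicBump (hasCompactSupport_parabolicBump hρ) (hv.of_le one_le_two) hvc y
      t).continuousAt
  have hconst := constant_of_has_deriv_right_zero hcont.continuousOn
    (fun t ht ↦ (hderiv t ht).hasDerivWithinAt) 1 (right_mem_Icc.2 zero_le_one)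
  simpa only [one_smul, zero_smul, sub_zero, integral_smul_const] using hconst

lemma integral_parabolicBump_smul_fderiv_comp_sub_of_contDiff (hρ : 0 ≤ ρ) {v : E → F}
    (hv : ContDiff ℝ 2 v) (hvc : HasCompactSupport v) {y : E}
    (hvh : HarmonicOnNhd v (closedBall y ρ)) :
    ∫ z, parabolicBump ρ z • fderiv ℝ v (y - z) ∂μ =
      (∫ z : E, parabolicBump ρ z ∂μ) • fderiv ℝ v y := by
  have hconv : HasFDerivAt (fun w ↦ ∫ z, parabolicBump ρ z • v (w - z) ∂μ)
      (∫ z, parabolicBump ρ z • fderiv ℝ v (y - z) ∂μ) y :=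
    hvc.hasFDerivAt_convolution_right (lsmul ℝ ℝ)
      continuous_parabolicBump.locallyIntegrable (hv.of_le one_le_two) y
  have hmean : (fun w ↦ ∫ z, parabolicBump ρ z • v (w - z) ∂μ) =ᶠ[𝓝 y]
      fun w ↦ (∫ z : E, parabolicBump ρ z ∂μ) • v w := by
    filter_upwards [eventually_forall_mem_ball fun z hz ↦ (hvh z hz).2] with w hw
    exact integral_parabolicBump_smul_comp_sub hρ hv hvc hw
  exact hconv.unique
    (((hv.differentiable two_ne_zero y).hasFDerivAt.const_smul _).congr_of_eventuallyEq hmean)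

lemma integral_parabolicBump_smul_fderiv_comp_sub (hρ : 0 ≤ ρ) {u : E → F} {y : E}
    (hu : HarmonicOnNhd u (closedBall y ρ)) :
    ∫ z, parabolicBump ρ z • fderiv ℝ u (y - z) ∂μ =
      (∫ z : E, parabolicBump ρ z ∂μ) • fderiv ℝ u y := by
  obtain ⟨v, hv, hvc, hvu⟩ := exists_contDiff_hasCompactSupport_eventuallyEq (n := 2)
    (isCompact_closedBall y ρ) (isOpen_setOfPred_harmonicAt u) hu
    (fun z hz ↦ hz.1.contDiffWithinAt)
  have hint : ∀ z, parabolicBump ρ z • fderiv ℝ u (y - z) =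
      parabolicBump ρ z • fderiv ℝ v (y - z) := fun z ↦ by
    by_cases hz : z ∈ ball (0 : E) ρ
    · have hmem : y - z ∈ closedBall y ρ := by simpa using (mem_ball_zero_iff.1 hz).le
      rw [(hvu _ hmem).fderiv_eq]
    · rw [parabolicBump_eq_zero_of_notMem_ball hρ hz, zero_smul, zero_smul]
  simp_rw [hint, ← (hvu y (mem_closedBall_self hρ)).fderiv_eq]
  exact integral_parabolicBump_smul_fderiv_comp_sub_of_contDiff hρ hv hvc fun z hz ↦
    (harmonicAt_congr_nhds (hvu z hz)).2 (hu z hz)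

lemma lintegral_parabolicBump_mul_enorm_fderiv_le (hρ : 0 ≤ ρ) {u : E → F} {y : E}
    (hu : HarmonicOnNhd u (closedBall y ρ)) :
    (∫⁻ z : E, ENNReal.ofReal (parabolicBump ρ z) ∂μ) * ‖fderiv ℝ u y‖ₑ ≤
      ENNReal.ofReal (ρ ^ 2) * ∫⁻ z in ball y ρ, ‖fderiv ℝ u z‖ₑ ∂μ := by
  have hbound : ∀ z, ‖parabolicBump ρ z • fderiv ℝ u (y - z)‖ₑ ≤
      ENNReal.ofReal (ρ ^ 2) * (ball y ρ).indicator (‖fderiv ℝ u ·‖ₑ) (y - z) := fun z ↦ by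
    rw [enorm_smul, Real.enorm_of_nonneg (parabolicBump_nonneg z)]
    by_cases hz : z ∈ ball (0 : E) ρ
    · have hmem : y - z ∈ ball y ρ := by simpa using hz
      rw [indicator_of_mem hmem]
      gcongr
      exact parabolicBump_le_sq z
    · simp [parabolicBump_eq_zero_of_notMem_ball hρ hz]
  calc (∫⁻ z : E, ENNReal.ofReal (parabolicBump ρ z) ∂μ) * ‖fderiv ℝ u y‖ₑ
      = ‖∫ z, parabolicBump ρ z • fderiv ℝ u (y - z) ∂μ‖ₑ := by
        rw [integral_parabolicBump_smul_fderiv_comp_sub hρ hu, enorm_smul,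
          Real.enorm_of_nonneg (integral_nonneg parabolicBump_nonneg),
          ofReal_integral_eq_lintegral_ofReal
            (continuous_parabolicBump.integrable_of_hasCompactSupport
              (hasCompactSupport_parabolicBump hρ)) (.of_forall parabolicBump_nonneg)]
    _ ≤ ∫⁻ z, ‖parabolicBump ρ z • fderiv ℝ u (y - z)‖ₑ ∂μ := enorm_integral_le_lintegral_enorm _
    _ ≤ ∫⁻ z, ENNReal.ofReal (ρ ^ 2) *
          (ball y ρ).indicator (‖fderiv ℝ u ·‖ₑ) (y - z) ∂μ := lintegral_mono hbound
    _ = ENNReal.ofReal (ρ ^ 2) * ∫⁻ z in ball y ρ, ‖fderiv ℝ u z‖ₑ ∂μ := by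
        rw [lintegral_const_mul' _ _ ENNReal.ofReal_ne_top,
          lintegral_sub_left_eq_self (fun z ↦ (ball y ρ).indicator (‖fderiv ℝ u ·‖ₑ) z),
          lintegral_indicator measurableSet_ball]

lemma enorm_fderiv_le_mul_setLAverage (hρ : 0 < ρ) {u : E → F} {y : E}
    (hu : HarmonicOnNhd u (closedBall y ρ)) :
    ‖fderiv ℝ u y‖ₑ ≤
      ENNReal.ofReal (4 / 3 * 2 ^ finrank ℝ E) * ⨍⁻ z in ball y ρ, ‖fderiv ℝ u z‖ₑ ∂μ := by
  have hball₀ : μ (ball y ρ) ≠ 0 := (measure_ball_pos μ y hρ).ne'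
  have hball : μ (ball y ρ) ≠ ∞ := measure_ball_lt_top.ne
  have hsq₀ : ENNReal.ofReal (ρ ^ 2) ≠ 0 := (ENNReal.ofReal_pos.2 (by positivity)).ne'
  set C := ENNReal.ofReal (4 / 3 * 2 ^ finrank ℝ E)
  rw [← ENNReal.mul_le_mul_iff_right (mul_ne_zero hsq₀ hball₀)
    (ENNReal.mul_ne_top ENNReal.ofReal_ne_top hball)]
  calc ENNReal.ofReal (ρ ^ 2) * μ (ball y ρ) * ‖fderiv ℝ u y‖ₑ
      ≤ C * (∫⁻ z : E, ENNReal.ofReal (parabolicBump ρ z) ∂μ) * ‖fderiv ℝ u y‖ₑ := by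
        rw [μ.addHaar_ball_center y]
        gcongr ?_ * _
        exact sq_mul_measure_ball_le_lintegral_parabolicBump μ
    _ ≤ C * (ENNReal.ofReal (ρ ^ 2) * ∫⁻ z in ball y ρ, ‖fderiv ℝ u z‖ₑ ∂μ) := by
        rw [mul_assoc]
        gcongr C * ?_
        exact lintegral_parabolicBump_mul_enorm_fderiv_le hρ.le hu
    _ = ENNReal.ofReal (ρ ^ 2) * μ (ball y ρ) * (C * ⨍⁻ z in ball y ρ, ‖fderiv ℝ u z‖ₑ ∂μ) := by
        rw [← measure_mul_setLAverage _ hball]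
        ring

lemma enorm_fderiv_le_mul_setLAverage_of_mem_ball {u : E → F} {x y : E} {r : ℝ} (hy : y ∈ ball x r)
    (hu : HarmonicOnNhd u (ball x (2 * r))) :
    ‖fderiv ℝ u y‖ₑ ≤
      ENNReal.ofReal (4 / 3 * 4 ^ finrank ℝ E) * ⨍⁻ z in ball x (2 * r), ‖fderiv ℝ u z‖ₑ ∂μ := by
  have hr : 0 < r := pos_of_mem_ball hy
  have hsub : closedBall y r ⊆ ball x (2 * r) :=
    closedBall_subset_ball' (by linarith [mem_ball.1 hy])
  have hdoubling : μ (ball x (2 * r)) = ENNReal.ofReal (2 ^ finrank ℝ E) * μ (ball y r) := by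
    rw [μ.addHaar_ball_mul_of_pos x two_pos, μ.addHaar_ball_center y]
  calc ‖fderiv ℝ u y‖ₑ
      ≤ ENNReal.ofReal (4 / 3 * 2 ^ finrank ℝ E) * ⨍⁻ z in ball y r, ‖fderiv ℝ u z‖ₑ ∂μ :=
        enorm_fderiv_le_mul_setLAverage hr fun z hz ↦ hu z (hsub hz)
    _ ≤ ENNReal.ofReal (4 / 3 * 2 ^ finrank ℝ E) * (ENNReal.ofReal (2 ^ finrank ℝ E) *
          ⨍⁻ z in ball x (2 * r), ‖fderiv ℝ u z‖ₑ ∂μ) := by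
        gcongr
        exact setLAverage_le_mul_setLAverage_of_subset (ENNReal.ofReal_pos.2 (by positivity)).ne'
          ENNReal.ofReal_ne_top (ball_subset_closedBall.trans hsub) hdoubling.le
    _ = ENNReal.ofReal (4 / 3 * 4 ^ finrank ℝ E) *
          ⨍⁻ z in ball x (2 * r), ‖fderiv ℝ u z‖ₑ ∂μ := by
        rw [← mul_assoc, ← ENNReal.ofReal_mul (by positivity), mul_assoc, ← mul_pow]
        norm_num

theorem statement10_general {p q : ℝ} (hp : 0 < p) (hq : 1 ≤ q) {u : E → F} {x : E} {r : ℝ}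
    (hr : 0 < r) (hu : HarmonicOnNhd u (ball x (2 * r))) :
    (⨍⁻ y in ball x r, ‖fderiv ℝ u y‖ₑ ^ p ∂μ) ^ (1 / p) ≤
      ENNReal.ofReal (4 / 3 * 4 ^ finrank ℝ E) *
        (⨍⁻ y in ball x (2 * r), ‖fderiv ℝ u y‖ₑ ^ q ∂μ) ^ (1 / q) := by
  have hmeas : AEMeasurable (fun y ↦ ‖fderiv ℝ u y‖ₑ) (μ.restrict (ball x (2 * r))) :=
    ((hu.contDiffOn.continuousOn_fderiv_of_isOpen isOpen_ball one_le_two).aestronglyMeasurable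
      measurableSet_ball).enorm
  have : Fact (μ (ball x (2 * r)) < ∞) := ⟨measure_ball_lt_top⟩
  have : NeZero (μ.restrict (ball x (2 * r))) :=
    ⟨by simpa using (measure_ball_pos μ x (by positivity : 0 < 2 * r)).ne'⟩
  have hjensen : ⨍⁻ y in ball x (2 * r), ‖fderiv ℝ u y‖ₑ ∂μ ≤
      (⨍⁻ y in ball x (2 * r), ‖fderiv ℝ u y‖ₑ ^ q ∂μ) ^ (1 / q) := by
    simpa using laverage_rpow_rpow_le_of_exponent_le one_pos hq hmeas
  calc _ ≤ ENNReal.ofReal (4 / 3 * 4 ^ finrank ℝ E) *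
          ⨍⁻ y in ball x (2 * r), ‖fderiv ℝ u y‖ₑ ∂μ :=
        setLAverage_rpow_rpow_le_of_forall_le hp measurableSet_ball (measure_ball_pos μ x hr).ne'
          measure_ball_lt_top.ne fun y hy ↦ enorm_fderiv_le_mul_setLAverage_of_mem_ball hy hu
    _ ≤ _ := by gcongr

end MeanValue

lemma IsHarmonicOn.harmonicOnNhd {n : ℕ} {u : EuclideanSpace ℝ (Fin n) → ℝ}
    {U : Set (EuclideanSpace ℝ (Fin n))} (hu : IsHarmonicOn u U) (hU : IsOpen U) :
    HarmonicOnNhd u U := by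
  refine fun x hx ↦ ⟨hu.1.contDiffAt (hU.mem_nhds hx), ?_⟩
  filter_upwards [hU.mem_nhds hx] with y hy
  have hdiff : DifferentiableAt ℝ (fderiv ℝ u) y :=
    ((hu.1.contDiffAt (hU.mem_nhds hy)).fderiv_right (m := 1) le_rfl).differentiableAt one_ne_zero
  rw [laplacian_eq_sum_fderiv_fderiv (EuclideanSpace.basisFun (Fin n) ℝ), Pi.zero_apply,
    ← hu.2 y hy]
  simp [fderiv_clm_apply hdiff (differentiableAt_const _)]

/-- weak reverse Hölder inequality for gradients of harmonic
functions: there are `ε ∈ (0,1)` and `C` depending only on `n` such that for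
`u` harmonic on `3B`,
`((1/|B|)∫_B |∇u|²)^{1/2} ≤ C ((1/|2B|)∫_{2B} |∇u|^{2−ε})^{1/(2−ε)}`. -/
theorem statement10 (n : ℕ) (hn : 1 ≤ n) :
    ∃ ε C : ℝ, 0 < ε ∧ ε < 1 ∧ 0 < C ∧
      ∀ (x : EuclideanSpace ℝ (Fin n)) (r : ℝ), 0 < r →
      ∀ u : EuclideanSpace ℝ (Fin n) → ℝ, IsHarmonicOn u (ball x (3 * r)) →
        ((volume (ball x r))⁻¹ *
            ∫⁻ y in ball x r, (‖fderiv ℝ u y‖₊ : ℝ≥0∞) ^ (2 : ℝ)) ^ (1 / (2 : ℝ)) ≤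
          ENNReal.ofReal C *
            ((volume (ball x (2 * r)))⁻¹ *
              ∫⁻ y in ball x (2 * r),
                (‖fderiv ℝ u y‖₊ : ℝ≥0∞) ^ (2 - ε)) ^ (1 / (2 - ε)) := by
  refine ⟨1 / 2, 4 / 3 * 4 ^ n, by norm_num, by norm_num, by positivity, fun x r hr u hu ↦ ?_⟩
  have hu₂ : HarmonicOnNhd u (ball x (2 * r)) :=
    (hu.harmonicOnNhd isOpen_ball).mono (ball_subset_ball (by linarith))
  simpa only [setLAverage_eq, ENNReal.div_eq_inv_mul, enorm_eq_nnnorm, finrank_euclideanSpace_fin]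
    using statement10_general (μ := volume) two_pos
      (by norm_num : (1 : ℝ) ≤ 2 - 1 / 2) hr hu₂
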